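/- arXiv:1705.07039 — 2 statements merged into one kernel-verified Lean document; each statement's English description precedes it below -/
import Mathlib

section
/- Let X be a real inner product space and let x, y ∈ X be linearly independent with ⟨x,y⟩ ≥ 0. Then the angular distance satisfies α_0[x,y] = (√(‖x‖²‖y‖² − ⟨x,y⟩²)/(‖x‖‖y‖)) · Σ_{k=0}^∞ C(1/2, k) · ( (‖x‖‖y‖ − ⟨x,y⟩)/(‖x‖‖y‖ + ⟨x,y⟩) )^k, where C(1/2, k) = (∏_{i=0}^{k−1} (1/2 − i)) / k! is the generalized binomial coefficient. -/
open scoped RealInnerProductSpace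

/-- The `p`-angular distance `α_p[x,y] = ‖‖x‖^(p-1) • x - ‖y‖^(p-1) • y‖`. -/
noncomputable def alphaD {X : Type*} [NormedAddCommGroup X] [NormedSpace ℝ X]
    (p : ℝ) (x y : X) : ℝ :=
  ‖(‖x‖ ^ (p - 1)) • x - (‖y‖ ^ (p - 1)) • y‖

/-- The generalized binomial coefficient `C(r, k) = (∏_{i=0}^{k-1} (r - i)) / k!`. -/
noncomputable def genBinom (r : ℝ) (k : ℕ) : ℝ :=
  (∏ i ∈ Finset.range k, (r - i)) / (Nat.factorial k : ℝ)

theorem genBinom_succ (r : ℝ) (k : ℕ) :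
    genBinom r (k + 1) = genBinom r k * ((r - k) / (k + 1)) := by
  unfold genBinom
  rw [Finset.prod_range_succ, Nat.factorial_succ]
  push_cast
  field_simp

theorem choose_eq_genBinom (r : ℝ) (k : ℕ) : Ring.choose r k = genBinom r k := by
  have h : (descPochhammer ℤ k).smeval r = ∏ i ∈ Finset.range k, (r - i) := by
    induction k with
    | zero => simp
    | succ k ih =>
      rw [Finset.prod_range_succ, ← ih]
      simp [descPochhammer_succ_right, Polynomial.smeval_mul, Polynomial.smeval_natCast]
  rw [Ring.choose_eq_smul, genBinom, h, smul_eq_mul, div_eq_inv_mul]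

theorem abs_succ (n : ℕ) : |genBinom (1/2) (n + 2)| =
    |genBinom (1/2) (n + 1)| * ((n + 1/2) / (n + 2)) := by
  rw [genBinom_succ, abs_mul, abs_div]
  congr 1
  push_cast
  rw [abs_of_nonpos (by linarith [(Nat.cast_nonneg n : (0:ℝ) ≤ n)]), abs_of_pos (by positivity)]
  congr 1 <;> ring

theorem sum_abs (n : ℕ) : ∑ k ∈ Finset.range n, |genBinom (1/2) (k + 1)| =
    1 - 2 * (n + 1) * |genBinom (1/2) (n + 1)| := by
  induction n with
  | zero => simp [genBinom]
  | succ n ih =>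
    rw [Finset.sum_range_succ, ih, abs_succ]
    push_cast
    field_simp
    ring

theorem summable_abs : Summable fun k => |genBinom (1/2) k| := by
  rw [← summable_nat_add_iff 1]
  refine summable_of_sum_range_le (c := 1) (fun _ => abs_nonneg _) fun n => ?_
  rw [sum_abs]
  have : 0 ≤ 2 * ((n:ℝ) + 1) * |genBinom (1/2) (n + 1)| := by positivity
  linarith

theorem tsum_Ioo (t : ℝ) (ht : t ∈ Set.Ioo (-1:ℝ) 1) :
    ∑' k : ℕ, genBinom (1/2) k * t ^ k = √(1 + t) := by
  have := (Real.one_add_rpow_hasFPowerSeriesOnBall_zero (a := 1/2)).hasSum (y := t) (by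
    rw [Metric.mem_eball, edist_zero_right, enorm_eq_nnnorm]
    rw [← ENNReal.coe_one, ENNReal.coe_lt_coe, ← NNReal.coe_lt_coe]
    simpa [abs_lt] using ht)
  rw [Real.sqrt_eq_rpow]
  rw [zero_add] at this
  rw [← this.tsum_eq]
  congr 1; ext k
  rw [binomialSeries_apply, choose_eq_genBinom]
  simp

theorem tsum_Icc (t : ℝ) (ht : t ∈ Set.Icc (-1:ℝ) 1) :
    ∑' k : ℕ, genBinom (1/2) k * t ^ k = √(1 + t) := by
  have hc : ContinuousOn (fun t : ℝ => ∑' k : ℕ, genBinom (1/2) k * t ^ k) (Set.Icc (-1) 1) := by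
    refine continuousOn_tsum (fun k => by fun_prop) summable_abs fun k t ht => ?_
    rw [Real.norm_eq_abs, abs_mul, abs_pow]
    exact mul_le_of_le_one_right (abs_nonneg _) (pow_le_one₀ (abs_nonneg _) (abs_le.2 ht))
  have hE : Set.EqOn (fun t : ℝ => ∑' k : ℕ, genBinom (1/2) k * t ^ k) (fun t => √(1 + t))
      (Set.Ioo (-1) 1) := fun t ht => tsum_Ioo t ht
  exact hE.of_subset_closure hc (by fun_prop) Set.Ioo_subset_Icc_self
    (by rw [closure_Ioo (by norm_num)]) ht

theorem stmt_11 {X : Type*} [NormedAddCommGroup X] [InnerProductSpace ℝ X]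
    (x y : X) (h : LinearIndependent ℝ ![x, y]) (hxy : 0 ≤ ⟪x, y⟫) :
    alphaD 0 x y =
      (Real.sqrt (‖x‖ ^ 2 * ‖y‖ ^ 2 - ⟪x, y⟫ ^ 2) / (‖x‖ * ‖y‖)) *
        ∑' k : ℕ, genBinom (1 / 2) k *
          ((‖x‖ * ‖y‖ - ⟪x, y⟫) / (‖x‖ * ‖y‖ + ⟪x, y⟫)) ^ k := by
  have hx : 0 < ‖x‖ := norm_pos_iff.2 (by simpa using h.ne_zero 0)
  have hy : 0 < ‖y‖ := norm_pos_iff.2 (by simpa using h.ne_zero 1)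
  have hcs : ⟪x, y⟫ ≤ ‖x‖ * ‖y‖ := real_inner_le_norm x y
  have hL : alphaD 0 x y ^ 2 = 2 * (1 - ⟪x, y⟫ / (‖x‖ * ‖y‖)) := by
    unfold alphaD
    rw [norm_sub_sq_real, norm_smul, norm_smul, real_inner_smul_left, real_inner_smul_right]
    simp only [zero_sub, Real.rpow_neg_one, norm_inv, norm_norm]
    field_simp
    ring
  have hp : 0 < ‖x‖ * ‖y‖ := by positivity
  have h0 : 0 ≤ alphaD 0 x y := norm_nonneg _
  rw [show ‖x‖ ^ 2 * ‖y‖ ^ 2 = (‖x‖ * ‖y‖) ^ 2 by ring]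
  generalize ‖x‖ * ‖y‖ = p at *
  generalize ⟪x, y⟫ = c at *
  have hs : 0 < p + c := by linarith
  rw [tsum_Icc _ ⟨by
    have : 0 ≤ (p - c) / (p + c) := div_nonneg (by linarith) hs.le
    linarith, by rw [div_le_one hs]; linarith⟩]
  rw [← sq_eq_sq₀ h0 (by positivity), hL, mul_pow, div_pow, Real.sq_sqrt (by nlinarith),
    Real.sq_sqrt (by have : 0 ≤ (p - c) / (p + c) := div_nonneg (by linarith) hs.le
                     linarith)]
  field_simp
  ring
end

section
/- Let p, q be real numbers with q ≠ 0 and p/q ≥ 1. Then for all nonzero x, y ∈ X, (p/(2p − q)) · max(‖x‖^(p−q), ‖y‖^(p−q)) · α_q[x,y] ≤ α_p[x,y] ≤ (p/q) · max(‖x‖^(p−q), ‖y‖^(p−q)) · α_q[x,y]. -/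
theorem aux_core {X : Type*} [NormedAddCommGroup X] [NormedSpace ℝ X]
    (r A B : ℝ) (u v : X) (hr : 1 ≤ r) (hB : B ≤ A) (hB0 : 0 ≤ B)
    (K : r * ‖v‖ * A ≤ (r - 1) * (A * ‖u‖) + B * ‖v‖) :
    r / (2 * r - 1) * A * ‖u - v‖ ≤ ‖A • u - B • v‖ ∧
    ‖A • u - B • v‖ ≤ r * A * ‖u - v‖ := by
  have hA0 : 0 ≤ A := hB0.trans hB
  have hn : ‖(A - B) • v‖ = (A - B) * ‖v‖ := by
    rw [norm_smul, Real.norm_of_nonneg (by linarith)]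
  have hd : ‖A • (u - v)‖ = A * ‖u - v‖ := by
    rw [norm_smul, Real.norm_of_nonneg hA0]
  have h1 : ‖u‖ - ‖v‖ ≤ ‖u - v‖ := norm_sub_norm_le u v
  have h2 : A * ‖u‖ - B * ‖v‖ ≤ ‖A • u - B • v‖ := by
    have := norm_sub_norm_le (A • u) (B • v)
    rwa [norm_smul, norm_smul, Real.norm_of_nonneg hA0, Real.norm_of_nonneg hB0] at this
  have h3 : ‖A • u - B • v‖ ≤ A * ‖u - v‖ + (A - B) * ‖v‖ := by
    rw [← hn, ← hd]
    have : A • u - B • v = A • (u - v) + (A - B) • v := by module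
    rw [this]; exact norm_add_le _ _
  have h4 : A * ‖u - v‖ ≤ ‖A • u - B • v‖ + (A - B) * ‖v‖ := by
    rw [← hn, ← hd]
    have : A • (u - v) = (A • u - B • v) - (A - B) • v := by module
    rw [this]; exact norm_sub_le _ _
  constructor
  · rw [div_mul_eq_mul_div, div_mul_eq_mul_div, div_le_iff₀ (by linarith)]
    have h5 := mul_le_mul_of_nonneg_left h4 (by linarith : 0 ≤ r)
    have h6 := mul_le_mul_of_nonneg_left h2 (by linarith : 0 ≤ r - 1)
    nlinarith
  · have h5 := mul_le_mul_of_nonneg_left h1 (mul_nonneg (by linarith : 0 ≤ r - 1) hA0)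
    nlinarith

theorem aux_K (r a b : ℝ) (hr : 1 ≤ r) (ha : 0 < a) (hb : 0 < b) :
    r * b * a ^ (r - 1) ≤ (r - 1) * (a ^ (r - 1) * a) + b ^ (r - 1) * b := by
  have h := one_add_mul_self_le_rpow_one_add (s := b / a - 1)
    (by have := div_pos hb ha; linarith) hr
  have e : 1 + (b / a - 1) = b / a := by ring
  rw [e, Real.div_rpow hb.le ha.le, le_div_iff₀ (by positivity)] at h
  have ea : a ^ r = a ^ (r - 1) * a := by
    rw [Real.rpow_sub_one ha.ne']; field_simp
  have eb : b ^ r = b ^ (r - 1) * b := by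
    rw [Real.rpow_sub_one hb.ne']; field_simp
  rw [ea, eb] at h
  have : (1 + r * (b / a - 1)) * (a ^ (r - 1) * a)
      = r * b * a ^ (r - 1) - (r - 1) * (a ^ (r - 1) * a) := by
    field_simp; ring
  linarith

theorem aux_one {X : Type*} [NormedAddCommGroup X] [NormedSpace ℝ X]
    (r : ℝ) (u v : X) (hr : 1 ≤ r) (hu : u ≠ 0) (hv : v ≠ 0) :
    r / (2 * r - 1) * max (‖u‖ ^ (r - 1)) (‖v‖ ^ (r - 1)) * ‖u - v‖ ≤ alphaD r u v ∧
    alphaD r u v ≤ r * max (‖u‖ ^ (r - 1)) (‖v‖ ^ (r - 1)) * ‖u - v‖ := by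
  wlog h : ‖v‖ ≤ ‖u‖ generalizing u v
  · have := this v u hv hu (le_of_not_ge h)
    rw [max_comm, norm_sub_rev u v]
    have e : alphaD r u v = alphaD r v u := norm_sub_rev _ _
    rwa [e]
  have hB : ‖v‖ ^ (r - 1) ≤ ‖u‖ ^ (r - 1) :=
    Real.rpow_le_rpow (norm_nonneg _) h (by linarith)
  rw [max_eq_left hB]
  exact aux_core r _ _ u v hr hB (by positivity)
    (aux_K r _ _ hr (norm_pos_iff.2 hu) (norm_pos_iff.2 hv))

theorem aux_norm {X : Type*} [NormedAddCommGroup X] [NormedSpace ℝ X]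
    (q : ℝ) (x : X) (hx : x ≠ 0) : ‖(‖x‖ ^ (q - 1)) • x‖ = ‖x‖ ^ q := by
  have h := norm_pos_iff.2 hx
  rw [norm_smul, Real.norm_of_nonneg (by positivity), Real.rpow_sub_one h.ne']
  field_simp

theorem stmt_12 {X : Type*} [NormedAddCommGroup X] [NormedSpace ℝ X]
    (p q : ℝ) (hq : q ≠ 0) (hpq : 1 ≤ p / q) (x y : X) (hx : x ≠ 0) (hy : y ≠ 0) :
    (p / (2 * p - q)) * max (‖x‖ ^ (p - q)) (‖y‖ ^ (p - q)) * alphaD q x y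
      ≤ alphaD p x y ∧
    alphaD p x y ≤ (p / q) * max (‖x‖ ^ (p - q)) (‖y‖ ^ (p - q)) * alphaD q x y := by
  have hx' := norm_pos_iff.2 hx
  have hy' := norm_pos_iff.2 hy
  have key := aux_one (p / q) ((‖x‖ ^ (q - 1)) • x) ((‖y‖ ^ (q - 1)) • y) hpq
    (smul_ne_zero (by positivity) hx) (smul_ne_zero (by positivity) hy)
  have e : q * (p / q - 1) = p - q := by field_simp
  have e2 : p - q + (q - 1) = p - 1 := by ring
  have ec : p / q / (2 * (p / q) - 1) = p / (2 * p - q) := by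
    have : 2 * (p / q) - 1 = (2 * p - q) / q := by field_simp
    rw [this, div_div_div_cancel_right₀ hq]
  have ea : alphaD (p / q) ((‖x‖ ^ (q - 1)) • x) ((‖y‖ ^ (q - 1)) • y) = alphaD p x y := by
    unfold alphaD
    rw [aux_norm q x hx, aux_norm q y hy, ← Real.rpow_mul hx'.le, ← Real.rpow_mul hy'.le,
      e, smul_smul, smul_smul, ← Real.rpow_add hx', ← Real.rpow_add hy', e2]
  rw [ea, ec, aux_norm q x hx, aux_norm q y hy, ← Real.rpow_mul hx'.le,
    ← Real.rpow_mul hy'.le, e] at key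
  exact key
end
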